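/- arXiv:2108.02367 — 5 statements merged into one kernel-verified Lean document; each statement's English description precedes it below -/
import Mathlib

section
/- For every real p > 1, every φ ∈ {0, π/4, π/2, 3π/4, π} and every θ ∈ [0, π], the two arcs of C_p swept clockwise and counterclockwise from ρ_p(φ) through angle θ have equal ℓ_p arc length: ∫_0^θ ‖ρ_p′(φ+t)‖_p dt = ∫_0^θ ‖ρ_p′(φ−t)‖_p dt (the integrands are defined off the finitely many quadrant-boundary angles). -/
open Real MeasureTheory intervalIntegral

/-- The ℓ_p norm of a point of ℝ². -/
noncomputable def lpN (p : ℝ) (z : ℝ × ℝ) : ℝ := (|z.1| ^ p + |z.2| ^ p) ^ (1 / p)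

/-- The normalization factor `N_p(φ) = (|sin φ|^p + |cos φ|^p)^{1/p}`. -/
noncomputable def Np (p φ : ℝ) : ℝ := (|Real.sin φ| ^ p + |Real.cos φ| ^ p) ^ (1 / p)

/-- The parameterization `ρ_p(φ) = (cos φ, sin φ)/N_p(φ)` of the ℓ_p unit circle. -/
noncomputable def rho (p φ : ℝ) : ℝ × ℝ := (Real.cos φ / Np p φ, Real.sin φ / Np p φ)

/-- The ℓ_p speed `‖ρ_p′(t)‖_p` of the parameterization `ρ_p`. -/
noncomputable def speed (p t : ℝ) : ℝ := lpN p (deriv (rho p) t)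

theorem speed_symm (p c : ℝ) (L : (ℝ × ℝ) ≃L[ℝ] (ℝ × ℝ))
    (hL : ∀ z, lpN p (L z) = lpN p z) (h : ∀ t, rho p (c - t) = L (rho p t)) (t : ℝ) :
    speed p (c - t) = speed p t := by
  have h1 : deriv (fun s => rho p (c - s)) t = - deriv (rho p) (c - t) :=
    deriv_comp_const_sub _ _ _
  have h2 : deriv (fun s => rho p (c - s)) t = L (deriv (rho p) t) := by
    have : (fun s => rho p (c - s)) = L ∘ rho p := funext h
    rw [this, ← fderiv_apply_one_eq_deriv, L.comp_fderiv]
    simp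
  have h3 : lpN p (- deriv (rho p) (c - t)) = lpN p (deriv (rho p) (c - t)) := by
    simp [lpN]
  unfold speed
  rw [← h3, ← h1, h2, hL]

theorem speed_neg (p t : ℝ) : speed p (-t) = speed p t := by
  have := speed_symm p 0
    ((ContinuousLinearEquiv.refl ℝ ℝ).prodCongr (ContinuousLinearEquiv.neg ℝ))
    (by intro z; simp [lpN]) (by intro t; simp [rho, Np, neg_div]) t
  simpa using this

theorem speed_swap (p t : ℝ) : speed p (π / 2 - t) = speed p t :=
  speed_symm p (π / 2) (ContinuousLinearEquiv.prodComm ℝ ℝ ℝ)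
    (by intro z; simp [lpN, add_comm])
    (by intro t; simp [rho, Np, Real.sin_pi_div_two_sub, Real.cos_pi_div_two_sub, add_comm]) t

theorem speed_period (p t : ℝ) : speed p (t + π / 2) = speed p t := by
  rw [← speed_neg p t, ← speed_swap p (-t)]
  congr 1; ring

/-- For `p > 1`, `φ ∈ {0, π/4, π/2, 3π/4, π}` and `θ ∈ [0, π]`, the arcs swept
clockwise and counterclockwise from `ρ_p(φ)` through angle `θ` have equal ℓ_p length. -/
theorem stmt_1 (p : ℝ) (hp : 1 < p)
    (φ : ℝ) (hφ : φ ∈ ({0, Real.pi / 4, Real.pi / 2, 3 * Real.pi / 4, Real.pi} : Set ℝ))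
    (θ : ℝ) (hθ : θ ∈ Set.Icc 0 Real.pi) :
    ∫ t in (0 : ℝ)..θ, speed p (φ + t) = ∫ t in (0 : ℝ)..θ, speed p (φ - t) := by
  congr 1
  funext t
  simp only [Set.mem_insert_iff, Set.mem_singleton_iff] at hφ
  rw [← speed_neg p (φ - t)]
  rcases hφ with rfl | rfl | rfl | rfl | rfl
  · congr 1; ring
  · rw [← speed_period p (-(π / 4 - t))]
    congr 1; ring
  · rw [← speed_period p (-(π / 2 - t)), ← speed_period p (_ + π / 2)]
    congr 1; ring
  · rw [← speed_period p (-(3 * π / 4 - t)), ← speed_period p (_ + π / 2),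
      ← speed_period p (_ + π / 2 + π / 2)]
    congr 1; ring
  · rw [← speed_period p (-(π - t)), ← speed_period p (_ + π / 2), ← speed_period p (_ + π / 2 + π / 2), ← speed_period p (_ + π / 2 + π / 2 + π / 2)]
    congr 1; ring
end

section
/- Define γ₁ : [0,4] → ℝ² by γ₁(τ) = (1 − τ/2, τ/2) for τ ∈ [0,2] and γ₁(τ) = (−(τ−2)/2, 1 − (τ−2)/2) for τ ∈ [2,4], and let γ₂(τ) be the reflection of γ₁(τ) across the x-axis. Then γ₁ and γ₂ are unit-speed curves on C₁ with respect to the ℓ₁ norm, ‖γ₁(τ) − γ₂(τ)‖₁ = τ for τ ∈ [0,2] and ‖γ₁(τ) − γ₂(τ)‖₁ = 4 − τ for τ ∈ [2,4], and consequently max over τ ∈ [0,4] of (1 + τ + ‖γ₁(τ) − γ₂(τ)‖₁) equals 5, the maximum being attained for every τ ∈ [2,4]. (This is the worst-case cost of the wireless evacuation algorithm Wireless-Search₁(0) on the ℓ₁ unit disk.) -/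
open Real MeasureTheory intervalIntegral

/-- The ℓ_p unit circle. -/
def Cp (p : ℝ) : Set (ℝ × ℝ) := {z | lpN p z = 1}

/-- Trajectory of robot #1 in Wireless-Search₁(0). -/
noncomputable def gamma1 : ℝ → ℝ × ℝ := fun τ =>
  if τ ≤ 2 then (1 - τ / 2, τ / 2) else (-(τ - 2) / 2, 1 - (τ - 2) / 2)

/-- Trajectory of robot #2: the reflection of `gamma1` across the x-axis. -/
noncomputable def gamma2 : ℝ → ℝ × ℝ := fun τ => ((gamma1 τ).1, -(gamma1 τ).2)

theorem lpN_one_eq (z : ℝ × ℝ) : lpN 1 z = |z.1| + |z.2| := by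
  simp [lpN]

theorem gamma1_le {t : ℝ} (h : t ≤ 2) : gamma1 t = (1 - t / 2, t / 2) := by
  simp [gamma1, h]

theorem gamma1_ge {t : ℝ} (h : 2 ≤ t) : gamma1 t = (-(t - 2) / 2, 1 - (t - 2) / 2) := by
  rcases h.eq_or_lt with rfl | h
  · norm_num [gamma1]
  · simp [gamma1, not_le.mpr h]

theorem dist_le {t : ℝ} (h0 : 0 ≤ t) (h : t ≤ 2) : lpN 1 (gamma1 t - gamma2 t) = t := by
  rw [lpN_one_eq, gamma2, gamma1_le h]
  simp only [Prod.fst_sub, Prod.snd_sub, sub_self, abs_zero]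
  rw [abs_of_nonneg (by linarith)]
  ring

theorem dist_ge {t : ℝ} (h0 : 2 ≤ t) (h : t ≤ 4) : lpN 1 (gamma1 t - gamma2 t) = 4 - t := by
  rw [lpN_one_eq, gamma2, gamma1_ge h0]
  simp only [Prod.fst_sub, Prod.snd_sub, sub_self, abs_zero]
  rw [abs_of_nonneg (by linarith)]
  ring

theorem circ {t : ℝ} (h0 : 0 ≤ t) (h : t ≤ 4) : |(gamma1 t).1| + |(gamma1 t).2| = 1 := by
  rcases le_total t 2 with h2 | h2
  · rw [gamma1_le h2]
    simp only
    rw [abs_of_nonneg (by linarith), abs_of_nonneg (by linarith)]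
    ring
  · rw [gamma1_ge h2]
    simp only
    rw [abs_of_nonpos (by linarith), abs_of_nonneg (by linarith)]
    ring

theorem hasDeriv_gamma1 {t : ℝ} (h : t < 2 ∨ 2 < t) :
    ∃ a b : ℝ, |a| + |b| = 1 ∧ HasDerivAt gamma1 (a, b) t := by
  rcases h with h | h
  · refine ⟨-(1 / 2), 1 / 2, by norm_num [abs_of_pos], ?_⟩
    have h1 : HasDerivAt (fun s : ℝ => (1 - s / 2, s / 2)) (-(1 / 2), 1 / 2) t :=
      (((hasDerivAt_id t).div_const 2).const_sub 1).prodMk ((hasDerivAt_id t).div_const 2)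
    refine h1.congr_of_eventuallyEq ?_
    filter_upwards [Iio_mem_nhds h] with s hs
    exact gamma1_le (le_of_lt hs)
  · refine ⟨-1 / 2, -(1 / 2), by norm_num [abs_of_pos, abs_div], ?_⟩
    have h1 : HasDerivAt (fun s : ℝ => (-(s - 2) / 2, 1 - (s - 2) / 2)) (-1 / 2, -(1 / 2)) t :=
      ((((hasDerivAt_id t).sub_const 2).neg).div_const 2).prodMk
        ((((hasDerivAt_id t).sub_const 2).div_const 2).const_sub 1)
    refine h1.congr_of_eventuallyEq ?_
    filter_upwards [Ioi_mem_nhds h] with s hs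
    exact gamma1_ge (le_of_lt hs)

theorem speed_s3 {t : ℝ} (h : t < 2 ∨ 2 < t) :
    lpN 1 (deriv gamma1 t) = 1 ∧ lpN 1 (deriv gamma2 t) = 1 := by
  obtain ⟨a, b, hab, hd⟩ := hasDeriv_gamma1 h
  have hd2 : HasDerivAt gamma2 (a, -b) t := by
    have h1 : HasDerivAt (fun s => (gamma1 s).1) a t := hd.fst
    have h2 : HasDerivAt (fun s => (gamma1 s).2) b t := hd.snd
    exact h1.prodMk h2.neg
  rw [hd.deriv, hd2.deriv, lpN_one_eq, lpN_one_eq]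
  simp only [abs_neg]
  exact ⟨hab, hab⟩

/-- `γ₁` and `γ₂` are unit-speed curves on `C₁` (w.r.t. ℓ₁), their ℓ₁ distance is `τ`
on `[0,2]` and `4 − τ` on `[2,4]`, and the worst-case evacuation cost
`max_{τ ∈ [0,4]} (1 + τ + ‖γ₁(τ) − γ₂(τ)‖₁)` equals `5`, attained for every `τ ∈ [2,4]`. -/
theorem stmt_3 :
    (∀ τ ∈ Set.Icc (0 : ℝ) 4, gamma1 τ ∈ Cp 1 ∧ gamma2 τ ∈ Cp 1) ∧
    (∀ τ ∈ Set.Ioo (0 : ℝ) 2 ∪ Set.Ioo (2 : ℝ) 4,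
      lpN 1 (deriv gamma1 τ) = 1 ∧ lpN 1 (deriv gamma2 τ) = 1) ∧
    (∀ τ ∈ Set.Icc (0 : ℝ) 2, lpN 1 (gamma1 τ - gamma2 τ) = τ) ∧
    (∀ τ ∈ Set.Icc (2 : ℝ) 4, lpN 1 (gamma1 τ - gamma2 τ) = 4 - τ) ∧
    IsGreatest ((fun τ => 1 + τ + lpN 1 (gamma1 τ - gamma2 τ)) '' Set.Icc (0 : ℝ) 4) 5 ∧
    (∀ τ ∈ Set.Icc (2 : ℝ) 4, 1 + τ + lpN 1 (gamma1 τ - gamma2 τ) = 5) := by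
  have cost : ∀ τ ∈ Set.Icc (2 : ℝ) 4, 1 + τ + lpN 1 (gamma1 τ - gamma2 τ) = 5 := by
    intro τ h
    rw [dist_ge h.1 h.2]
    ring
  refine ⟨?_, ?_, fun τ h => dist_le h.1 h.2, fun τ h => dist_ge h.1 h.2, ⟨?_, ?_⟩, cost⟩
  · intro τ h
    simp only [Cp, Set.mem_setOf_eq, lpN_one_eq, gamma2, abs_neg]
    exact ⟨circ h.1 h.2, circ h.1 h.2⟩
  · rintro τ (h | h)
    · exact speed_s3 (Or.inl h.2)
    · exact speed_s3 (Or.inr h.1)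
  · exact ⟨2, ⟨by norm_num, by norm_num⟩, cost 2 ⟨by norm_num, by norm_num⟩⟩
  · rintro _ ⟨τ, h, rfl⟩
    simp only
    rcases le_total τ 2 with h2 | h2
    · rw [dist_le h.1 h2]
      linarith
    · exact (cost τ ⟨h2, h.2⟩).le
end

section
/- For every real p ∈ (1,2], the function f(s) = 1 + π_p/2 + ∫_0^s (z^{p²−p}(1−z^p)^{1−p} + 1)^{1/p} dz + 2(1−s^p)^{1/p}, defined for s ∈ [0,1], attains its maximum over [0,1] at s_p = ((2^p − 1)^{1/(p−1)} + 1)^{−1/p}, and s_p is the unique zero of f′ in (0,1). -/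
open Real MeasureTheory intervalIntegral

/-- `π_p`, half the ℓ_p-circumference of the ℓ_p unit circle. -/
noncomputable def piP (p : ℝ) : ℝ := 2 * ∫ t in (0 : ℝ)..(Real.pi / 2), speed p t

/-- the `p`-th power of the slope of the circle -/
noncomputable def DD (p s : ℝ) : ℝ := s ^ (p ^ 2 - p) * (1 - s ^ p) ^ (1 - p)

noncomputable def KK (p : ℝ) : ℝ := ((2 : ℝ) ^ p - 1) ^ (1 / (p - 1))

noncomputable def SS (p : ℝ) : ℝ := (KK p + 1) ^ (-(1 / p))

lemma two_pow_pos (p : ℝ) (hp1 : 1 < p) : 0 < (2 : ℝ) ^ p - 1 := by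
  have := Real.one_lt_rpow (x := 2) (z := p) (by norm_num) (by linarith)
  linarith

lemma KK_pos (p : ℝ) (hp1 : 1 < p) : 0 < KK p := Real.rpow_pos_of_pos (two_pow_pos p hp1) _

lemma KK_pow (p : ℝ) (hp1 : 1 < p) : KK p ^ (p - 1) = 2 ^ p - 1 := by
  unfold KK
  rw [← Real.rpow_mul (two_pow_pos p hp1).le, one_div, inv_mul_cancel₀ (by linarith), Real.rpow_one]

lemma SS_mem (p : ℝ) (hp1 : 1 < p) : SS p ∈ Set.Ioo (0 : ℝ) 1 := by
  have := KK_pos p hp1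
  refine ⟨Real.rpow_pos_of_pos (by linarith) _, Real.rpow_lt_one_of_one_lt_of_neg (by linarith) ?_⟩
  have : 0 < 1 / p := by positivity
  linarith

lemma SS_pow (p : ℝ) (hp1 : 1 < p) : SS p ^ p * (KK p + 1) = 1 := by
  have := KK_pos p hp1
  unfold SS
  rw [← Real.rpow_mul (by linarith)]
  have : -(1 / p) * p = -1 := by field_simp
  rw [this, Real.rpow_neg_one, inv_mul_cancel₀ (by linarith)]

lemma rpow_mem_Ioo_aux (p s : ℝ) (hp1 : 1 < p) (hs : s ∈ Set.Ioo (0 : ℝ) 1) :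
    s ^ p ∈ Set.Ioo (0 : ℝ) 1 :=
  ⟨Real.rpow_pos_of_pos hs.1 _, Real.rpow_lt_one hs.1.le hs.2 (by linarith)⟩

lemma DD_pos (p s : ℝ) (hp1 : 1 < p) (hs : s ∈ Set.Ioo (0 : ℝ) 1) : 0 < DD p s := by
  have h := rpow_mem_Ioo_aux p s hp1 hs
  exact mul_pos (Real.rpow_pos_of_pos hs.1 _) (Real.rpow_pos_of_pos (by linarith [h.2]) _)

lemma DD_eq (p s : ℝ) (hp1 : 1 < p) (hs : s ∈ Set.Ioo (0 : ℝ) 1) :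
    (2 ^ p - 1) * DD p s = (KK p * s ^ p / (1 - s ^ p)) ^ (p - 1) := by
  have h := rpow_mem_Ioo_aux p s hp1 hs
  have hK := KK_pos p hp1
  have h2 : 0 < 1 - s ^ p := by linarith [h.2]
  rw [Real.div_rpow (by have := h.1; positivity) h2.le, Real.mul_rpow hK.le h.1.le, KK_pow p hp1,
    ← Real.rpow_mul hs.1.le]
  unfold DD
  rw [show (1 - p) = -(p - 1) by ring, Real.rpow_neg h2.le, show p ^ 2 - p = p * (p - 1) by ring]
  ring

lemma DD_lt (p s : ℝ) (hp1 : 1 < p) (hs : s ∈ Set.Ioo (0 : ℝ) 1) (h : s < SS p) :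
    (2 ^ p - 1) * DD p s < 1 := by
  have h1 := rpow_mem_Ioo_aux p s hp1 hs
  have hK := KK_pos p hp1
  have h2 : 0 < 1 - s ^ p := by linarith [h1.2]
  have h3 := SS_pow p hp1
  have h4 : s ^ p < SS p ^ p := Real.rpow_lt_rpow hs.1.le h (by linarith)
  rw [DD_eq p s hp1 hs]
  apply Real.rpow_lt_one _ _ (by linarith)
  · have := h1.1
    positivity
  · rw [div_lt_one h2]; nlinarith

lemma DD_gt (p s : ℝ) (hp1 : 1 < p) (hs : s ∈ Set.Ioo (0 : ℝ) 1) (h : SS p < s) :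
    1 < (2 ^ p - 1) * DD p s := by
  have h1 := rpow_mem_Ioo_aux p s hp1 hs
  have hK := KK_pos p hp1
  have h2 : 0 < 1 - s ^ p := by linarith [h1.2]
  have h3 := SS_pow p hp1
  have h4 : SS p ^ p < s ^ p := Real.rpow_lt_rpow (SS_mem p hp1).1.le h (by linarith)
  rw [DD_eq p s hp1 hs]
  apply Real.one_lt_rpow _ (by linarith)
  rw [one_lt_div h2]; nlinarith

lemma DD_SS (p : ℝ) (hp1 : 1 < p) : (2 ^ p - 1) * DD p (SS p) = 1 := by
  have hs := SS_mem p hp1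
  have h1 := rpow_mem_Ioo_aux p _ hp1 hs
  have h2 : 0 < 1 - SS p ^ p := by linarith [h1.2]
  have h3 := SS_pow p hp1
  rw [DD_eq p _ hp1 hs]
  have : KK p * SS p ^ p / (1 - SS p ^ p) = 1 := by
    rw [div_eq_one_iff_eq h2.ne']; linarith
  rw [this, Real.one_rpow]

/-- the derivative of `f` -/
noncomputable def GG (p s : ℝ) : ℝ := (DD p s + 1) ^ (1 / p) - (2 ^ p * DD p s) ^ (1 / p)

lemma GG_pos (p s : ℝ) (hp1 : 1 < p) (hs : s ∈ Set.Ioo (0 : ℝ) 1) (h : s < SS p) :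
    0 < GG p s := by
  have h1 := DD_pos p s hp1 hs
  have h2 := DD_lt p s hp1 hs h
  exact sub_pos.2 (Real.rpow_lt_rpow (by positivity) (by linarith) (by positivity))

lemma GG_neg (p s : ℝ) (hp1 : 1 < p) (hs : s ∈ Set.Ioo (0 : ℝ) 1) (h : SS p < s) :
    GG p s < 0 := by
  have h1 := DD_pos p s hp1 hs
  have h2 := DD_gt p s hp1 hs h
  exact sub_neg.2 (Real.rpow_lt_rpow (by positivity) (by linarith) (by positivity))

lemma GG_SS (p : ℝ) (hp1 : 1 < p) : GG p (SS p) = 0 := by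
  have h2 := DD_SS p hp1
  unfold GG
  rw [show 2 ^ p * DD p (SS p) = DD p (SS p) + 1 by linarith, sub_self]

noncomputable def II (p z : ℝ) : ℝ := (DD p z + 1) ^ (1 / p)

lemma II_cont (p s : ℝ) (hp1 : 1 < p) (hs : s ∈ Set.Ico (0 : ℝ) 1) : ContinuousAt (II p) s := by
  have h2 : 0 < 1 - s ^ p := by linarith [Real.rpow_lt_one hs.1 hs.2 (show 0 < p by linarith)]
  have h3 : 0 ≤ DD p s := mul_nonneg (Real.rpow_nonneg hs.1 _) (Real.rpow_nonneg h2.le _)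
  have c1 : ContinuousAt (fun s : ℝ => s ^ (p ^ 2 - p)) s :=
    Real.continuousAt_rpow_const _ _ (Or.inr (by nlinarith))
  have c2 : ContinuousAt (fun s : ℝ => 1 - s ^ p) s :=
    continuousAt_const.sub (Real.continuousAt_rpow_const _ _ (Or.inr (by linarith)))
  have c3 : ContinuousAt (DD p) s := c1.mul (c2.rpow_const (Or.inl h2.ne'))
  exact (c3.add continuousAt_const).rpow_const (Or.inl (show DD p s + 1 ≠ 0 by positivity))

lemma II_int (p s : ℝ) (hp1 : 1 < p) (hs : s ∈ Set.Ico (0 : ℝ) 1) :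
    IntervalIntegrable (II p) volume 0 s := by
  apply ContinuousOn.intervalIntegrable
  rw [Set.uIcc_of_le hs.1]
  exact fun z hz => (II_cont p z hp1 ⟨hz.1, hz.2.trans_lt hs.2⟩).continuousWithinAt

noncomputable def FF (p s : ℝ) : ℝ :=
  1 + piP p / 2 + (∫ z in (0 : ℝ)..s, II p z) + 2 * (1 - s ^ p) ^ (1 / p)

lemma FF_deriv (p s : ℝ) (hp1 : 1 < p) (hs : s ∈ Set.Ioo (0 : ℝ) 1) :
    HasDerivAt (FF p) (GG p s) s := by
  have h1 := rpow_mem_Ioo_aux p s hp1 hs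
  have h2 : 0 < 1 - s ^ p := by linarith [h1.2]
  have hD := DD_pos p s hp1 hs
  have d1 : HasDerivAt (fun s => ∫ z in (0 : ℝ)..s, II p z) (II p s) s := by
    apply integral_hasDerivAt_right (II_int p s hp1 ⟨hs.1.le, hs.2⟩) _
      (II_cont p s hp1 ⟨hs.1.le, hs.2⟩)
    apply ContinuousOn.stronglyMeasurableAtFilter (s := Set.Ioo 0 1) isOpen_Ioo _ s hs
    exact fun z hz => (II_cont p z hp1 ⟨hz.1.le, hz.2⟩).continuousWithinAt
  have d2 : HasDerivAt (fun s : ℝ => 1 - s ^ p) (-(p * s ^ (p - 1))) s :=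
    (Real.hasDerivAt_rpow_const (Or.inl hs.1.ne')).const_sub 1
  have d3 := (d2.rpow_const (p := 1 / p) (Or.inl h2.ne')).const_mul 2
  have d4 := (d1.const_add (1 + piP p / 2)).add d3
  refine HasDerivAt.congr_deriv (f := FF p) d4 ?_
  have e : (2 ^ p * DD p s) ^ (1 / p) = 2 * (s ^ (p - 1) * (1 - s ^ p) ^ (1 / p - 1)) := by
    rw [Real.mul_rpow (by positivity) hD.le]
    unfold DD
    rw [Real.mul_rpow (Real.rpow_nonneg hs.1.le _)
      (Real.rpow_nonneg h2.le _), ← Real.rpow_mul hs.1.le, ← Real.rpow_mul h2.le,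
      ← Real.rpow_mul (by norm_num)]
    have e1 : p * (1 / p) = 1 := by field_simp
    have e2 : (p ^ 2 - p) * (1 / p) = p - 1 := by field_simp
    have e3 : (1 - p) * (1 / p) = 1 / p - 1 := by field_simp
    rw [e1, e2, e3, Real.rpow_one]
  unfold GG
  rw [e]
  unfold II
  field_simp
  ring

lemma FF_cont2 (p : ℝ) (hp1 : 1 < p) (b : ℝ) (hb : 0 ≤ b)
    (hI : IntervalIntegrable (II p) volume 0 b) : ContinuousOn (FF p) (Set.Icc 0 b) := by
  have c1 : ContinuousOn (fun s => ∫ z in (0 : ℝ)..s, II p z) (Set.Icc 0 b) := by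
    have := continuousOn_primitive_interval' hI (Set.left_mem_uIcc)
    rwa [Set.uIcc_of_le hb] at this
  have c2 : Continuous (fun s : ℝ => 2 * (1 - s ^ p) ^ (1 / p)) := by
    refine continuous_const.mul ((continuous_const.sub
      (Real.continuous_rpow_const (by linarith))).rpow_const fun x => Or.inr (by positivity))
  exact (continuousOn_const.add c1).add c2.continuousOn

lemma FF_left (p s : ℝ) (hp1 : 1 < p) (hs : s ∈ Set.Icc (0 : ℝ) (SS p)) : FF p s ≤ FF p (SS p) := by
  have hS := SS_mem p hp1
  have : MonotoneOn (FF p) (Set.Icc 0 (SS p)) := by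
    apply monotoneOn_of_deriv_nonneg (convex_Icc _ _)
      (FF_cont2 p hp1 _ hS.1.le (II_int p _ hp1 ⟨hS.1.le, hS.2⟩))
    · rw [interior_Icc]
      exact fun x hx => (FF_deriv p x hp1
        ⟨hx.1, hx.2.trans hS.2⟩).differentiableAt.differentiableWithinAt
    · rw [interior_Icc]
      intro x hx
      have hx' : x ∈ Set.Ioo (0 : ℝ) 1 := ⟨hx.1, hx.2.trans hS.2⟩
      rw [(FF_deriv p x hp1 hx').deriv]
      exact (GG_pos p x hp1 hx' hx.2).le
  exact this hs ⟨hS.1.le, le_rfl⟩ hs.2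

lemma FF_right (p s b : ℝ) (hp1 : 1 < p) (hs : s ∈ Set.Icc (SS p) b) (hb : b ≤ 1)
    (hI : IntervalIntegrable (II p) volume 0 b) : FF p s ≤ FF p (SS p) := by
  have hS := SS_mem p hp1
  have hSb := hs.1.trans hs.2
  have : AntitoneOn (FF p) (Set.Icc (SS p) b) := by
    apply antitoneOn_of_deriv_nonpos (convex_Icc _ _)
      ((FF_cont2 p hp1 b (hS.1.le.trans hSb) hI).mono (Set.Icc_subset_Icc_left hS.1.le))
    · rw [interior_Icc]
      exact fun x hx => (FF_deriv p x hp1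
        ⟨hS.1.trans hx.1, hx.2.trans_le hb⟩).differentiableAt.differentiableWithinAt
    · rw [interior_Icc]
      intro x hx
      have hx' : x ∈ Set.Ioo (0 : ℝ) 1 := ⟨hS.1.trans hx.1, hx.2.trans_le hb⟩
      rw [(FF_deriv p x hp1 hx').deriv]
      exact (GG_neg p x hp1 hx' hx.1).le
  exact this ⟨le_rfl, hSb⟩ hs hs.1

/-- The integrand is integrable up to the endpoint `1`. -/
lemma II_int_one (p : ℝ) (hp1 : 1 < p) : IntervalIntegrable (II p) volume 0 1 := by
  have hc : ContinuousOn (fun s : ℝ => s - (1 - s ^ p) ^ (1 / p)) (Set.Icc 0 1) := by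
    apply Continuous.continuousOn
    exact continuous_id.sub ((continuous_const.sub
      (Real.continuous_rpow_const (by linarith))).rpow_const fun x => Or.inr (by positivity))
  have hd : ∀ s ∈ Set.Ioo (0 : ℝ) 1, HasDerivAt (fun s : ℝ => s - (1 - s ^ p) ^ (1 / p))
      (1 + DD p s ^ (1 / p)) s := by
    intro s hs
    have h1 := rpow_mem_Ioo_aux p s hp1 hs
    have h2 : 0 < 1 - s ^ p := by linarith [h1.2]
    have d2 : HasDerivAt (fun s : ℝ => 1 - s ^ p) (-(p * s ^ (p - 1))) s :=
      (Real.hasDerivAt_rpow_const (Or.inl hs.1.ne')).const_sub 1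
    have d3 := (hasDerivAt_id s).sub (d2.rpow_const (p := 1 / p) (Or.inl h2.ne'))
    refine HasDerivAt.congr_deriv d3 ?_
    unfold DD
    rw [Real.mul_rpow (Real.rpow_nonneg hs.1.le _)
      (Real.rpow_nonneg h2.le _), ← Real.rpow_mul hs.1.le, ← Real.rpow_mul h2.le]
    have e2 : (p ^ 2 - p) * (1 / p) = p - 1 := by field_simp
    have e3 : (1 - p) * (1 / p) = 1 / p - 1 := by field_simp
    rw [e2, e3]
    field_simp
    ring
  have hi := integrableOn_deriv_of_nonneg hc hd (fun s hs => by
    have := DD_pos p s hp1 hs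
    positivity)
  rw [intervalIntegrable_iff_integrableOn_Ioo_of_le zero_le_one]
  refine (hi.mono_set Set.Ioo_subset_Ioc_self).mono' ?_ ?_
  · apply ContinuousOn.aestronglyMeasurable _ measurableSet_Ioo
    exact fun z hz => (II_cont p z hp1 ⟨hz.1.le, hz.2⟩).continuousWithinAt
  · refine (ae_restrict_iff' measurableSet_Ioo).2 (Filter.Eventually.of_forall fun s hs => ?_)
    have hD := DD_pos p s hp1 hs
    have : (DD p s + 1) ^ (1 / p) ≤ DD p s ^ (1 / p) + 1 ^ (1 / p) :=
      Real.rpow_add_le_add_rpow hD.le zero_le_one (by positivity)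
        (by rw [div_le_one (by linarith)]; exact hp1.le)
    rw [Real.one_rpow] at this
    unfold II
    rw [Real.norm_of_nonneg (by positivity)]
    linarith

/-- For `p ∈ (1,2]`, the evacuation-cost function
`f(s) = 1 + π_p/2 + ∫_0^s (z^{p²−p}(1−z^p)^{1−p} + 1)^{1/p} dz + 2(1−s^p)^{1/p}`
attains its maximum over `[0,1]` at `s_p = ((2^p−1)^{1/(p−1)} + 1)^{−1/p}`, which is
the unique zero of `f′` in `(0,1)`. -/
theorem stmt_7 (p : ℝ) (hp1 : 1 < p) (hp2 : p ≤ 2) :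
    let sp : ℝ := (((2 : ℝ) ^ p - 1) ^ (1 / (p - 1)) + 1) ^ (-(1 / p))
    let f : ℝ → ℝ := fun s =>
      1 + piP p / 2
        + (∫ z in (0 : ℝ)..s, (z ^ (p ^ 2 - p) * (1 - z ^ p) ^ (1 - p) + 1) ^ (1 / p))
        + 2 * (1 - s ^ p) ^ (1 / p)
    sp ∈ Set.Ioo (0 : ℝ) 1 ∧
    (∀ s ∈ Set.Icc (0 : ℝ) 1, f s ≤ f sp) ∧
    (∀ s ∈ Set.Ioo (0 : ℝ) 1, deriv f s = 0 ↔ s = sp) := by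
  show SS p ∈ Set.Ioo (0 : ℝ) 1 ∧ (∀ s ∈ Set.Icc (0 : ℝ) 1, FF p s ≤ FF p (SS p)) ∧
    (∀ s ∈ Set.Ioo (0 : ℝ) 1, deriv (FF p) s = 0 ↔ s = SS p)
  refine ⟨SS_mem p hp1, fun s hs => ?_, fun s hs => ?_⟩
  · rcases le_total s (SS p) with h | h
    · exact FF_left p s hp1 ⟨hs.1, h⟩
    · exact FF_right p s 1 hp1 ⟨h, hs.2⟩ le_rfl (II_int_one p hp1)
  · rw [(FF_deriv p s hp1 hs).deriv]
    constructor
    · intro h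
      rcases lt_trichotomy s (SS p) with h1 | h1 | h1
      · exact absurd h (GG_pos p s hp1 hs h1).ne'
      · exact h1
      · exact absurd h (GG_neg p s hp1 hs h1).ne
    · rintro rfl
      exact GG_SS p hp1
end

section
/- For every real p ≥ 2, the equation w^p + 1 = 2(1 − w)^p has a unique root w_p in the open interval (0,1). -/
open Real

/-- For every real `p ≥ 2`, the equation `w^p + 1 = 2(1 − w)^p` has a unique root in
the open interval `(0,1)`. -/
theorem stmt_8 (p : ℝ) (hp : 2 ≤ p) :
    ∃! w : ℝ, w ∈ Set.Ioo (0 : ℝ) 1 ∧ w ^ p + 1 = 2 * (1 - w) ^ p := by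
  have hp0 : 0 < p := by linarith
  have key : ∀ a b : ℝ, 0 < a → b < 1 → a < b →
      a ^ p + 1 - 2 * (1 - a) ^ p < b ^ p + 1 - 2 * (1 - b) ^ p := by
    intro a b ha hb hab
    have h1 : a ^ p < b ^ p := Real.rpow_lt_rpow ha.le hab hp0
    have h2 : (1 - b) ^ p < (1 - a) ^ p :=
      Real.rpow_lt_rpow (by linarith) (by linarith) hp0
    linarith
  have hc : ContinuousOn (fun w : ℝ => w ^ p + 1 - 2 * (1 - w) ^ p) (Set.Icc 0 1) := by
    apply Continuous.continuousOn
    have h1 : Continuous (fun w : ℝ => w ^ p) := Real.continuous_rpow_const hp0.le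
    have h2 : Continuous (fun w : ℝ => (1 - w) ^ p) :=
      h1.comp (continuous_const.sub continuous_id)
    exact (h1.add continuous_const).sub (continuous_const.mul h2)
  have hmem : (0 : ℝ) ∈ Set.Ioo ((fun w : ℝ => w ^ p + 1 - 2 * (1 - w) ^ p) 0)
      ((fun w : ℝ => w ^ p + 1 - 2 * (1 - w) ^ p) 1) := by
    simp only [Set.mem_Ioo, sub_zero, sub_self, Real.zero_rpow hp0.ne', Real.one_rpow]
    norm_num
  obtain ⟨w, hw, hw0⟩ := intermediate_value_Ioo zero_le_one hc hmem
  simp only at hw0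
  refine ⟨w, ⟨hw, by linarith⟩, ?_⟩
  rintro v ⟨hv, hv0⟩
  rcases lt_trichotomy v w with h | h | h
  · have := key v w hv.1 hw.2 h
    linarith
  · exact h
  · have := key w v hw.1 hv.2 h
    linarith
end

section
/- For every real p ∈ [2,∞), let w_p ∈ (0,1) be the unique root of w^p + 1 = 2(1−w)^p and set s_p = (w_p^{p/(p−1)} + 1)^{−1/p}. Then s_p ∈ (2^{−1/p}, 1), and s_p is the unique critical point in (2^{−1/p}, 1) of the function f₁(s) = 1 + π_p/2 + ∫_{2^{−1/p}}^s (z^{p²−p}(1−z^p)^{1−p} + 1)^{1/p} dz + 2^{1/p}((1−s^p)^{1/p} + s); equivalently, s = s_p is the unique solution in (2^{−1/p},1) of (1 + s^{p(p−1)}(1−s^p)^{1−p})^{1/p} = 2^{1/p}(s^{p−1}(1−s^p)^{(1−p)/p} − 1). -/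
open Real MeasureTheory intervalIntegral

lemma aux_inv (p : ℝ) (hp : 2 ≤ p) (s : ℝ) (h0 : 0 < s) (h1 : s < 1) :
    ((s ^ (p - 1) * (1 - s ^ p) ^ ((1 - p) / p))⁻¹ ^ (p / (p - 1)) + 1) ^ (-(1 / p)) = s := by
  have hb : 0 < 1 - s ^ p := by
    have := Real.rpow_lt_one h0.le h1 (show 0 < p by linarith)
    linarith
  have hp1 : p - 1 ≠ 0 := by linarith
  have hp0 : p ≠ 0 := by linarith
  have e1 : (s ^ (p - 1) * (1 - s ^ p) ^ ((1 - p) / p))⁻¹ ^ (p / (p - 1))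
      = s ^ (-p) * (1 - s ^ p) := by
    rw [mul_inv, ← Real.rpow_neg h0.le, ← Real.rpow_neg hb.le,
      Real.mul_rpow (by positivity) (by positivity), ← Real.rpow_mul h0.le, ← Real.rpow_mul hb.le]
    have a1 : -(p - 1) * (p / (p - 1)) = -p := by field_simp
    have a2 : -((1 - p) / p) * (p / (p - 1)) = 1 := by field_simp; ring
    rw [a1, a2, Real.rpow_one]
  rw [e1]
  have e2 : s ^ (-p) * (1 - s ^ p) + 1 = s ^ (-p) := by
    have : s ^ (-p) * s ^ p = 1 := by rw [← Real.rpow_add h0]; simp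
    linear_combination -this
  rw [e2, ← Real.rpow_mul h0.le]
  have : -p * -(1 / p) = 1 := by field_simp
  rw [this, Real.rpow_one]

lemma aux_key (p : ℝ) (hp : 2 ≤ p) (w : ℝ) (hw : w ∈ Set.Ioo (0 : ℝ) 1)
    (hroot : w ^ p + 1 = 2 * (1 - w) ^ p) (x : ℝ) (hx : 0 < x) :
    (1 + x ^ p) ^ (1 / p) = (2 : ℝ) ^ (1 / p) * (x - 1) ↔ x⁻¹ = w := by
  have hp0 : p ≠ 0 := by linarith
  have hpp : 0 < p := by linarith
  obtain ⟨hw0, hw1⟩ := hw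
  have hxp : 0 < x ^ p := by positivity
  have main : ∀ hx1 : 1 < x, ((1 + x ^ p) ^ (1 / p) = (2 : ℝ) ^ (1 / p) * (x - 1) ↔
      x⁻¹ ^ p + 1 = 2 * (1 - x⁻¹) ^ p) := by
    intro hx1
    have hx1' : 0 < x - 1 := by linarith
    have e : 1 - x⁻¹ = (x - 1) * x⁻¹ := by field_simp
    rw [← Real.rpow_left_inj (x := (1 + x ^ p) ^ (1 / p)) (by positivity) (by positivity) hp0,
      Real.mul_rpow (by positivity) hx1'.le, ← Real.rpow_mul (by positivity),
      ← Real.rpow_mul (by positivity), one_div_mul_cancel hp0, Real.rpow_one, Real.rpow_one,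
      e, Real.mul_rpow hx1'.le (by positivity), Real.inv_rpow hx.le]
    field_simp
  constructor
  · intro h
    have hx1 : 1 < x := by
      have : 0 < (2 : ℝ) ^ (1 / p) * (x - 1) := by rw [← h]; positivity
      have := pos_of_mul_pos_right this (by positivity)
      linarith
    rw [main hx1] at h
    have hv0 : 0 < x⁻¹ := by positivity
    have hv1 : x⁻¹ < 1 := inv_lt_one_of_one_lt₀ hx1
    rcases lt_trichotomy x⁻¹ w with hl | hl | hl
    · have a := Real.rpow_lt_rpow hv0.le hl hpp
      have b := Real.rpow_lt_rpow (by linarith : 0 ≤ 1 - w) (by linarith : 1 - w < 1 - x⁻¹) hpp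
      linarith
    · exact hl
    · have a := Real.rpow_lt_rpow hw0.le hl hpp
      have b := Real.rpow_lt_rpow (by linarith : 0 ≤ 1 - x⁻¹) (by linarith : 1 - x⁻¹ < 1 - w) hpp
      linarith
  · intro h
    have hx1 : 1 < x := by
      rw [← h] at hw1
      exact (inv_lt_one₀ hx).1 hw1
    rw [main hx1, h]
    exact hroot

lemma aux_eq (p : ℝ) (hp : 2 ≤ p) (w : ℝ) (hw : w ∈ Set.Ioo (0 : ℝ) 1)
    (hroot : w ^ p + 1 = 2 * (1 - w) ^ p) (s : ℝ) (h0 : 0 < s) (h1 : s < 1) :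
    ((1 + s ^ (p * (p - 1)) * (1 - s ^ p) ^ (1 - p)) ^ (1 / p)
        = (2 : ℝ) ^ (1 / p) * (s ^ (p - 1) * (1 - s ^ p) ^ ((1 - p) / p) - 1)) ↔
      s = (w ^ (p / (p - 1)) + 1) ^ (-(1 / p)) := by
  have hb : 0 < 1 - s ^ p := by
    have := Real.rpow_lt_one h0.le h1 (show 0 < p by linarith)
    linarith
  have hp1 : 0 < p - 1 := by linarith
  have hpp : 0 < p := by linarith
  have hp0 : p ≠ 0 := by linarith
  have hinv := aux_inv p hp s h0 h1
  have hx : 0 < s ^ (p - 1) * (1 - s ^ p) ^ ((1 - p) / p) := by positivity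
  have hxp : s ^ (p * (p - 1)) * (1 - s ^ p) ^ (1 - p)
      = (s ^ (p - 1) * (1 - s ^ p) ^ ((1 - p) / p)) ^ p := by
    rw [Real.mul_rpow (by positivity) (by positivity), ← Real.rpow_mul h0.le,
      ← Real.rpow_mul hb.le, div_mul_cancel₀ _ hp0, mul_comm p]
  rw [hxp, aux_key p hp w hw hroot _ hx]
  constructor
  · intro h
    rw [h] at hinv
    exact hinv.symm
  · intro h
    have hw0 := hw.1
    have hv0 := inv_pos.2 hx
    have h2 := hinv.trans h
    have hne : -(1 / p) ≠ 0 := by simpa using hp0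
    rw [Real.rpow_left_inj (by positivity) (by positivity) hne] at h2
    have h3 := add_right_cancel h2
    rwa [Real.rpow_left_inj hv0.le hw0.le (by positivity)] at h3

lemma aux_deriv (p : ℝ) (hp : 2 ≤ p) (c a s : ℝ) (ha0 : 0 < a) (hs : a < s) (h1 : s < 1) :
    HasDerivAt (fun s : ℝ => c
        + (∫ z in a..s, (z ^ (p ^ 2 - p) * (1 - z ^ p) ^ (1 - p) + 1) ^ (1 / p))
        + (2 : ℝ) ^ (1 / p) * ((1 - s ^ p) ^ (1 / p) + s))
      ((1 + s ^ (p * (p - 1)) * (1 - s ^ p) ^ (1 - p)) ^ (1 / p)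
        - (2 : ℝ) ^ (1 / p) * (s ^ (p - 1) * (1 - s ^ p) ^ ((1 - p) / p) - 1)) s := by
  have h0 : 0 < s := ha0.trans hs
  have hpp : 0 < p := by linarith
  have hp0 : p ≠ 0 := by linarith
  have hb : ∀ z : ℝ, 0 < z → z < 1 → 0 < 1 - z ^ p := by
    intro z hz0 hz1
    have := Real.rpow_lt_one hz0.le hz1 hpp
    linarith
  have hc : ContinuousOn
      (fun z : ℝ => (z ^ (p ^ 2 - p) * (1 - z ^ p) ^ (1 - p) + 1) ^ (1 / p)) (Set.Ioo 0 1) := by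
    intro z hz
    have hz0 : 0 < z := hz.1
    have hbz := hb z hz.1 hz.2
    apply ContinuousAt.continuousWithinAt
    refine ContinuousAt.rpow_const (ContinuousAt.add (ContinuousAt.mul ?_ ?_)
      continuousAt_const) (Or.inl (by positivity))
    · exact Real.continuousAt_rpow_const _ _ (Or.inl hz0.ne')
    · exact ContinuousAt.rpow_const (continuousAt_const.sub
        (Real.continuousAt_rpow_const _ _ (Or.inl hz0.ne'))) (Or.inl hbz.ne')
  have hsub : Set.uIcc a s ⊆ Set.Ioo 0 1 := by
    rw [Set.uIcc_of_le hs.le]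
    intro z hz
    exact ⟨ha0.trans_le hz.1, hz.2.trans_lt h1⟩
  have hI := intervalIntegral.integral_hasDerivAt_right
    ((hc.mono hsub).intervalIntegrable)
    (hc.stronglyMeasurableAtFilter isOpen_Ioo s ⟨h0, h1⟩)
    (hc.continuousAt (isOpen_Ioo.mem_nhds ⟨h0, h1⟩))
  have hd : HasDerivAt (fun s : ℝ => (1 - s ^ p) ^ (1 / p) + s)
      (-(p * s ^ (p - 1)) * (1 / p) * (1 - s ^ p) ^ (1 / p - 1) + 1) s :=
    (((Real.hasDerivAt_rpow_const (p := p) (Or.inl h0.ne')).const_sub 1).rpow_const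
      (Or.inl (hb s h0 h1).ne')).add (hasDerivAt_id s)
  refine ((hI.const_add c).add (hd.const_mul ((2 : ℝ) ^ (1 / p)))).congr_deriv ?_
  have e1 : 1 / p - 1 = (1 - p) / p := by field_simp
  have e2 : p ^ 2 - p = p * (p - 1) := by ring
  rw [e1, e2, add_comm (1 : ℝ) (s ^ (p * (p - 1)) * _)]
  field_simp
  ring

/-- For `p ∈ [2,∞)`, with `w_p ∈ (0,1)` the root of `w^p + 1 = 2(1−w)^p` and
`s_p = (w_p^{p/(p−1)} + 1)^{−1/p}`, one has `s_p ∈ (2^{−1/p}, 1)` and `s_p` is the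
unique critical point of `f₁` in `(2^{−1/p}, 1)`; equivalently, `s_p` is the unique
solution there of `(1 + s^{p(p−1)}(1−s^p)^{1−p})^{1/p} = 2^{1/p}(s^{p−1}(1−s^p)^{(1−p)/p} − 1)`. -/
theorem stmt_9 (p : ℝ) (hp : 2 ≤ p) (w : ℝ) (hw : w ∈ Set.Ioo (0 : ℝ) 1)
    (hroot : w ^ p + 1 = 2 * (1 - w) ^ p) :
    let sp : ℝ := (w ^ (p / (p - 1)) + 1) ^ (-(1 / p))
    let f₁ : ℝ → ℝ := fun s =>
      1 + piP p / 2
        + (∫ z in ((2 : ℝ) ^ (-(1 / p)))..s,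
            (z ^ (p ^ 2 - p) * (1 - z ^ p) ^ (1 - p) + 1) ^ (1 / p))
        + (2 : ℝ) ^ (1 / p) * ((1 - s ^ p) ^ (1 / p) + s)
    sp ∈ Set.Ioo ((2 : ℝ) ^ (-(1 / p))) 1 ∧
    (∀ s ∈ Set.Ioo ((2 : ℝ) ^ (-(1 / p))) 1, deriv f₁ s = 0 ↔ s = sp) ∧
    (∀ s ∈ Set.Ioo ((2 : ℝ) ^ (-(1 / p))) 1,
      ((1 + s ^ (p * (p - 1)) * (1 - s ^ p) ^ (1 - p)) ^ (1 / p)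
        = (2 : ℝ) ^ (1 / p) * (s ^ (p - 1) * (1 - s ^ p) ^ ((1 - p) / p) - 1)) ↔ s = sp) := by
  intro sp f₁
  have hpp : 0 < p := by linarith
  have hp1 : 0 < p - 1 := by linarith
  have hp0 : p ≠ 0 := hpp.ne'
  have ha0 : (0 : ℝ) < 2 ^ (-(1 / p)) := by positivity
  have hneg : -(1 / p) < 0 := by
    have : 0 < 1 / p := by positivity
    linarith
  refine ⟨⟨?_, ?_⟩, ?_, ?_⟩
  · have hq : w ^ (p / (p - 1)) < 1 := Real.rpow_lt_one hw.1.le hw.2 (by positivity)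
    have hq0 : 0 < w ^ (p / (p - 1)) := Real.rpow_pos_of_pos hw.1 _
    exact Real.rpow_lt_rpow_of_neg (by linarith) (by linarith) hneg
  · have hq0 : 0 < w ^ (p / (p - 1)) := Real.rpow_pos_of_pos hw.1 _
    exact Real.rpow_lt_one_of_one_lt_of_neg (by linarith) hneg
  · intro s hs
    have hd := aux_deriv p hp (1 + piP p / 2) _ s ha0 hs.1 hs.2
    have hd' : deriv f₁ s = _ := hd.deriv
    rw [hd', sub_eq_zero]
    exact aux_eq p hp w hw hroot s (ha0.trans hs.1) hs.2
  · intro s hs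
    exact aux_eq p hp w hw hroot s (ha0.trans hs.1) hs.2
end
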